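/- arXiv:1407.6077 — 2 statements merged into one kernel-verified Lean document; each statement's English description precedes it below -/
import Mathlib

section
/- Let λ = (λ_1 ≥ … ≥ λ_k ≥ 1) be a partition with k positive parts and let n ≥ k. Then, as polynomials in x_1,…,x_n: s^{[n]}_λ · s^{[2,n]}_{(λ_1,…,λ_{k−1})} = s^{[2,n]}_λ · s^{[n]}_{(λ_1,…,λ_{k−1})} + x_1 · s^{[n]}_{(λ_1−1,…,λ_k−1)} · s^{[2,n]}_{(λ_1+1,…,λ_{k−1}+1)}. -/
/-- A semistandard Young tableau of shape `(lam 0, lam 1, …, lam (k-1))` (so `lam i` is the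
length of the `(i+1)`-st row), with entries in `{a, a+1, …, b}`: rows weakly increase,
columns strictly increase.  Entries outside the shape are `0`. -/
structure SSYT (k : ℕ) (lam : ℕ → ℤ) (a b : ℕ) where
  entry : ℕ → ℕ → ℕ
  zero_outside : ∀ i j : ℕ, ¬(i < k ∧ (j : ℤ) < lam i) → entry i j = 0
  lower : ∀ i j : ℕ, i < k → (j : ℤ) < lam i → a ≤ entry i j
  upper : ∀ i j : ℕ, i < k → (j : ℤ) < lam i → entry i j ≤ b
  row_weak : ∀ i j₁ j₂ : ℕ, i < k → j₁ ≤ j₂ → (j₂ : ℤ) < lam i → entry i j₁ ≤ entry i j₂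
  col_strict : ∀ i₁ i₂ j : ℕ, i₁ < i₂ → i₂ < k → (j : ℤ) < lam i₂ → entry i₁ j < entry i₂ j

/-- The monomial `Π_i x_i^{m(i,T)}` of a tableau: the product of `x_{T(c)}` over the
cells `c` of the shape. -/
noncomputable def SSYT.weight {k : ℕ} {lam : ℕ → ℤ} {a b : ℕ} (T : SSYT k lam a b) :
    MvPolynomial ℕ ℤ :=
  ∏ i ∈ Finset.range k, ∏ j ∈ Finset.range (lam i).toNat, MvPolynomial.X (T.entry i j)

/-- `(lam 0, …, lam (k-1))` is a partition: weakly decreasing with nonnegative entries. -/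
def IsPartitionSeq (k : ℕ) (lam : ℕ → ℤ) : Prop :=
  (∀ i, i + 1 < k → lam (i + 1) ≤ lam i) ∧ (∀ i, i < k → 0 ≤ lam i)

/-- The Schur polynomial `s^{[a,b]}_lam = Σ_T Π_i x_i^{m(i,T)}`, the sum running over all
semistandard Young tableaux of shape `lam` with entries in `{a,…,b}`; by convention it is
`0` if `lam` is not a partition. -/
noncomputable def schur (k : ℕ) (lam : ℕ → ℤ) (a b : ℕ) : MvPolynomial ℕ ℤ :=
  letI := Classical.dec (IsPartitionSeq k lam)
  if IsPartitionSeq k lam then ∑ᶠ T : SSYT k lam a b, T.weight else 0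

/-- Complete homogeneous generating series in `x_a,…,x_b`. -/
noncomputable def hser (a b : ℕ) : PowerSeries (MvPolynomial ℕ ℤ) :=
  ∏ i ∈ Finset.Icc a b, PowerSeries.mk (fun j => (MvPolynomial.X i : MvPolynomial ℕ ℤ) ^ j)

/-- Complete homogeneous polynomials, indexed by integers. -/
noncomputable def hh (a b : ℕ) (m : ℤ) : MvPolynomial ℕ ℤ :=
  if 0 ≤ m then PowerSeries.coeff m.toNat (hser a b) else 0

theorem geom_mul (y : MvPolynomial ℕ ℤ) :
    PowerSeries.mk (fun j => y ^ j) * (1 - PowerSeries.C y * PowerSeries.X) = 1 := by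
  ext1 n
  rw [mul_sub, ← mul_assoc, map_sub]
  cases n with
  | zero => simp
  | succ n =>
    rw [PowerSeries.coeff_succ_mul_X]
    simp [PowerSeries.coeff_mul_C, pow_succ, PowerSeries.coeff_one]

theorem hh_neg (a b : ℕ) (m : ℤ) (hm : m < 0) : hh a b m = 0 := by
  simp [hh, not_le.mpr hm]

theorem hh_of_ser (a b a' b' : ℕ) (y : MvPolynomial ℕ ℤ)
    (h : hser a' b' = hser a b * (1 - PowerSeries.C y * PowerSeries.X)) (m : ℤ) :
    hh a' b' m = hh a b m - y * hh a b (m - 1) := by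
  rcases lt_or_ge m 0 with hm | hm
  · rw [hh_neg _ _ _ hm, hh_neg _ _ _ hm, hh_neg _ _ (m-1) (by omega)]; simp
  · obtain ⟨n, rfl⟩ := Int.eq_ofNat_of_zero_le hm
    simp only [hh, h, hm, if_true]
    rw [mul_sub, ← mul_assoc, map_sub]
    cases n with
    | zero => simp
    | succ n =>
      have e : ((n+1 : ℕ) : ℤ) - 1 = n := by push_cast; ring
      rw [e]
      simp only [Int.toNat_natCast, PowerSeries.coeff_succ_mul_X, PowerSeries.coeff_mul_C]
      simp [mul_comm]

theorem hh_top (a b : ℕ) (hab : a ≤ b + 1) (m : ℤ) :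
    hh a b m = hh a (b+1) m - MvPolynomial.X (b+1) * hh a (b+1) (m - 1) := by
  apply hh_of_ser
  rw [hser, hser, ← Finset.insert_Icc_right_eq_Icc_add_one hab, Finset.prod_insert (by simp),
    mul_comm, ← mul_assoc, mul_comm _ (PowerSeries.mk _), geom_mul, one_mul]

theorem hh_bot (n : ℕ) (hn : 1 ≤ n) (m : ℤ) :
    hh 2 n m = hh 1 n m - MvPolynomial.X 1 * hh 1 n (m - 1) := by
  apply hh_of_ser
  have : Finset.Icc 1 n = insert 1 (Finset.Icc 2 n) := by
    ext i; simp; omega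
  rw [hser, hser, this, Finset.prod_insert (by simp),
    mul_comm, ← mul_assoc, mul_comm _ (PowerSeries.mk _), geom_mul, one_mul]

theorem hh_base (a b : ℕ) (hab : b < a) (m : ℤ) : hh a b m = if m = 0 then 1 else 0 := by
  rcases lt_or_ge m 0 with hm | hm
  · rw [hh_neg _ _ _ hm, if_neg (by omega)]
  · obtain ⟨n, rfl⟩ := Int.eq_ofNat_of_zero_le hm
    simp [hh, hser, Finset.Icc_eq_empty (not_le.mpr hab), PowerSeries.coeff_one]

theorem tele (a b : ℕ) (hab : a ≤ b + 1) (c s : ℤ) (n : ℕ) :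
    ∑ m ∈ Finset.Icc c (c + n), MvPolynomial.X (b+1) ^ (c + n - m).toNat * hh a b (m + s)
    = hh a (b+1) (c + n + s) - MvPolynomial.X (b+1) ^ (n+1) * hh a (b+1) (c - 1 + s) := by
  induction n with
  | zero =>
    simp [hh_top a b hab]
    congr 1; ring
  | succ n ih =>
    have e : Finset.Icc c (c + (n+1 : ℕ)) = insert (c + (n+1:ℕ)) (Finset.Icc c (c + n)) := by
      ext i; simp; omega
    rw [e, Finset.sum_insert (by simp)]
    have : ∑ m ∈ Finset.Icc c (c + n), (MvPolynomial.X (b+1) : MvPolynomial ℕ ℤ) ^ (c + (n+1:ℕ) - m).toNat * hh a b (m + s)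
       = MvPolynomial.X (b+1) * ∑ m ∈ Finset.Icc c (c + n), MvPolynomial.X (b+1) ^ (c + n - m).toNat * hh a b (m + s) := by
      rw [Finset.mul_sum]
      refine Finset.sum_congr rfl fun m hm => ?_
      simp only [Finset.mem_Icc] at hm
      rw [show (c + (n+1:ℕ) - m).toNat = (c + n - m).toNat + 1 by omega]
      ring
    rw [this, ih, hh_top a b hab (c + (n+1:ℕ) + s), show c + ((n+1:ℕ):ℤ) + s - 1 = c + n + s by push_cast; ring]
    simp
    ring

theorem det_row_next {R : Type*} [CommRing R] (k : ℕ) (A B : Matrix (Fin k) (Fin k) R) (c : ℕ → R)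
    (hlast : ∀ i j : Fin k, (i : ℕ) + 1 = k → B i j = A i j)
    (hne : ∀ (i j : Fin k) (h : (i:ℕ) + 1 < k), B i j = A i j - c i * A ⟨i + 1, h⟩ j) :
    A.det = B.det := by
  cases k with
  | zero => simp
  | succ k =>
    rw [← Matrix.det_submatrix_equiv_self Fin.revPerm A, ← Matrix.det_submatrix_equiv_self Fin.revPerm B]
    apply Matrix.det_eq_of_forall_row_eq_smul_add_pred (fun i => c (Fin.rev i.succ))
    · intro j
      simp only [Matrix.submatrix_apply]
      rw [hlast]; simp
    · intro i j
      simp only [Matrix.submatrix_apply]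
      have h1 : ((Fin.revPerm i.succ : Fin (k+1)) : ℕ) + 1 < k + 1 := by
        have h2 : ((Fin.revPerm i.succ : Fin (k+1)) : ℕ) = k - (i + 1) := by simp [Fin.val_rev]
        have := i.2
        omega
      rw [hne _ _ h1]
      have : (⟨_, h1⟩ : Fin (k+1)) = Fin.revPerm i.castSucc := by
        ext; simp [Fin.val_rev]; have := i.2; omega
      rw [this]
      simp

/-- lower bound of the interlacing condition -/
def lowB (k : ℕ) (lam : ℕ → ℤ) (i : ℕ) : ℤ := if i + 1 < k then lam (i+1) else 0

/-- interlacing shapes -/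
noncomputable def AA (k : ℕ) (lam : ℕ → ℤ) : Fin k → Finset ℤ := fun i => Finset.Icc (lowB k lam i) (lam i)

/-- extension by zero -/
def extz (k : ℕ) (r : Fin k → ℤ) : ℕ → ℤ := fun i => if h : i < k then r ⟨i, h⟩ else 0

/-- Jacobi-Trudi determinant -/
noncomputable def JT (k : ℕ) (lam : ℕ → ℤ) (a b : ℕ) : MvPolynomial ℕ ℤ :=
  (Matrix.of fun i j : Fin k => hh a b (lam i - i + j)).det

theorem extz_coe (k : ℕ) (r : Fin k → ℤ) (i : Fin k) : extz k r i = r i := by simp [extz]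

theorem JT_step (k : ℕ) (lam : ℕ → ℤ) (a b : ℕ) (hab : a ≤ b + 1) (hp : IsPartitionSeq k lam) :
    JT k lam a (b+1) = ∑ r ∈ Fintype.piFinset (AA k lam),
      (∏ i : Fin k, MvPolynomial.X (b+1) ^ (lam i - r i).toNat) * JT k (extz k r) a b := by
  have key : ∀ i : Fin k, lowB k lam i ≤ lam i := by
    intro i
    unfold lowB
    split_ifs with h
    · exact hp.1 i h
    · exact hp.2 i i.2
  have h1 : JT k lam a (b+1) = (Matrix.of fun i j : Fin k => 
      ∑ m ∈ AA k lam i, (MvPolynomial.X (b+1) : MvPolynomial ℕ ℤ) ^ (lam i - m).toNat * hh a b (m + (-i + j))).det := by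
    have ent : ∀ i j : Fin k, ∑ m ∈ AA k lam i, (MvPolynomial.X (b+1) : MvPolynomial ℕ ℤ) ^ (lam i - m).toNat * hh a b (m + (-i + j))
       = hh a (b+1) (lam i - i + j) - MvPolynomial.X (b+1) ^ ((lam i - lowB k lam i).toNat + 1) * hh a (b+1) (lowB k lam i - 1 - i + j) := by
      intro i j
      have := tele a b hab (lowB k lam i) (-i + j) (lam i - lowB k lam i).toNat
      have e : lowB k lam i + ((lam i - lowB k lam i).toNat : ℤ) = lam i := by have := key i; omega
      rw [e] at this
      rw [AA, this]
      congr 2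
      · ring
      · congr 1; ring
    apply det_row_next k _ _ (fun i => MvPolynomial.X (b+1) ^ ((lam i - lowB k lam i).toNat + 1))
    · intro i j hi
      simp only [Matrix.of_apply]
      rw [ent, hh_neg _ _ (lowB k lam i - 1 - i + j)]
      · simp
      · rw [lowB, if_neg (by omega)]; have := j.2; omega
    · intro i j hi
      simp only [Matrix.of_apply]
      rw [ent]
      have : lowB k lam i = lam (i+1) := by rw [lowB, if_pos hi]
      rw [this]
      congr 3
      push_cast; ring
  rw [h1]
  have h2 := (Matrix.detRowAlternating (R := MvPolynomial ℕ ℤ) (n := Fin k)).toMultilinearMap.map_sum_finset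
    (fun i m => fun j : Fin k => (MvPolynomial.X (b+1) : MvPolynomial ℕ ℤ) ^ (lam i - m).toNat * hh a b (m + (-i + j))) (AA k lam)
  have h3 : (Matrix.of fun i j : Fin k => 
      ∑ m ∈ AA k lam i, (MvPolynomial.X (b+1) : MvPolynomial ℕ ℤ) ^ (lam i - m).toNat * hh a b (m + (-i + j)))
    = fun i => ∑ m ∈ AA k lam i, (fun j : Fin k => (MvPolynomial.X (b+1) : MvPolynomial ℕ ℤ) ^ (lam i - m).toNat * hh a b (m + (-i + j))) := by
    funext i j
    simp [Finset.sum_apply]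
  rw [h3]
  refine h2.trans (Finset.sum_congr rfl fun r hr => ?_)
  have h4 := Matrix.det_mul_column (fun i : Fin k => (MvPolynomial.X (b+1) : MvPolynomial ℕ ℤ) ^ (lam i - r i).toNat) (Matrix.of fun i j : Fin k => hh a b (extz k r i - i + j))
  rw [JT, ← h4]
  refine congrArg Matrix.det ?_
  funext i j
  simp only [Matrix.of_apply, extz_coe]
  congr 2
  ring

theorem JT_base (k : ℕ) (lam : ℕ → ℤ) (a b : ℕ) (hab : b < a) (hp : IsPartitionSeq k lam) :
    JT k lam a b = if (∀ i < k, lam i = 0) then 1 else 0 := by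
  have anti : ∀ i, i < k → lam i ≤ lam 0 := by
    intro i
    induction i with
    | zero => simp
    | succ i ih => intro h; exact (hp.1 i h).trans (ih (by omega))
  split_ifs with h
  · rw [JT]
    rw [← Matrix.det_one (n := Fin k)]
    congr 1
    ext1 i j
    rw [Matrix.of_apply, hh_base _ _ hab, h i i.2, Matrix.one_apply]
    congr 1
    rw [Fin.ext_iff]
    apply propext
    omega
  · push Not at h
    obtain ⟨i, hi, h0⟩ := h
    rw [JT]
    apply Matrix.det_eq_zero_of_row_eq_zero (⟨0, by omega⟩ : Fin k)
    intro j
    have := anti i hi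
    have := hp.2 i hi
    rw [Matrix.of_apply, hh_base _ _ hab, if_neg]
    simp only [Nat.cast_zero]
    omega

@[ext] theorem SSYT.ext' {k : ℕ} {lam : ℕ → ℤ} {a b : ℕ} {S T : SSYT k lam a b}
    (h : ∀ i j, S.entry i j = T.entry i j) : S = T := by
  cases S; cases T
  simp only [SSYT.mk.injEq]
  funext i j
  exact h i j

/-- Add a horizontal strip filled with `b+1`. -/
def extT {k : ℕ} {lam mu : ℕ → ℤ} {a b : ℕ} (hab : a ≤ b + 1) (hp : IsPartitionSeq k lam)
    (h1 : ∀ i < k, mu i ≤ lam i) (h2 : ∀ i, i + 1 < k → lam (i+1) ≤ mu i)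
    (S : SSYT k mu a b) : SSYT k lam a (b+1) where
  entry i j := if i < k ∧ (j:ℤ) < mu i then S.entry i j else
    if i < k ∧ (j:ℤ) < lam i then b + 1 else 0
  zero_outside i j h := by
    rw [if_neg, if_neg h]
    rintro ⟨h3, h4⟩
    exact h ⟨h3, h4.trans_le (h1 i h3)⟩
  lower i j hi hj := by
    split_ifs with h
    · exact S.lower i j h.1 h.2
    · exact hab
    · tauto
  upper i j hi hj := by
    split_ifs with h
    · exact (S.upper i j h.1 h.2).trans (by omega)
    · exact le_rfl
    · omega
  row_weak i j₁ j₂ hi hj hj2 := by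
    by_cases h : (j₂ : ℤ) < mu i
    · rw [if_pos ⟨hi, by omega⟩, if_pos ⟨hi, h⟩]
      exact S.row_weak i j₁ j₂ hi hj h
    · rw [if_neg (by tauto : ¬ (i < k ∧ (j₂:ℤ) < mu i)), if_pos (⟨hi, hj2⟩ : i < k ∧ (j₂:ℤ) < lam i)]
      split_ifs with h3
      · exact (S.upper i j₁ h3.1 h3.2).trans (by omega)
      · exact le_rfl
      · omega
  col_strict i₁ i₂ j hi hi2 hj := by
    have anti : ∀ d, i₁ + 1 + d < k → lam (i₁ + 1 + d) ≤ lam (i₁ + 1) := by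
      intro d
      induction d with
      | zero => simp
      | succ d ih => intro h; exact (hp.1 _ h).trans (ih (by omega))
    have h3 := anti (i₂ - (i₁ + 1)) (by omega)
    rw [show i₁ + 1 + (i₂ - (i₁ + 1)) = i₂ by omega] at h3
    have h4 := h2 i₁ (by omega)
    have h5 : (j:ℤ) < mu i₁ := by omega
    rw [if_pos ⟨by omega, h5⟩]
    split_ifs with h6 h7
    · exact S.col_strict i₁ i₂ j hi hi2 h6.2
    · have := S.upper i₁ j (by omega) h5
      omega
    · tauto

theorem extT_weight {k : ℕ} {lam mu : ℕ → ℤ} {a b : ℕ} (hab : a ≤ b + 1) (hp : IsPartitionSeq k lam)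
    (h1 : ∀ i < k, mu i ≤ lam i) (h2 : ∀ i, i + 1 < k → lam (i+1) ≤ mu i) (h0 : ∀ i < k, 0 ≤ mu i)
    (S : SSYT k mu a b) : (extT hab hp h1 h2 S).weight =
      (∏ i : Fin k, MvPolynomial.X (b+1) ^ (lam i - mu i).toNat) * S.weight := by
  rw [SSYT.weight, SSYT.weight, Finset.prod_range, Finset.prod_range, ← Finset.prod_mul_distrib]
  refine Finset.prod_congr rfl fun i _ => ?_
  have e1 := h1 i i.2
  have e0 := h0 i i.2
  have e : (lam i).toNat = (mu i).toNat + (lam i - mu i).toNat := by omega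
  rw [e, Finset.prod_range_add, mul_comm]
  congr 1
  · refine (Finset.prod_congr rfl fun j hj => ?_).trans ((Finset.prod_const
      (MvPolynomial.X (b+1) : MvPolynomial ℕ ℤ)).trans (by rw [Finset.card_range]))
    simp only [Finset.mem_range] at hj
    simp only [extT]
    rw [if_neg, if_pos]
    · exact ⟨i.2, by omega⟩
    · push Not; intro _; omega
  · refine Finset.prod_congr rfl fun j hj => ?_
    simp only [Finset.mem_range] at hj
    simp only [extT]
    rw [if_pos]
    exact ⟨i.2, by omega⟩

theorem exists_cut (P : ℕ → Prop) (N : ℕ) (hP : ∀ i j, i ≤ j → j < N → P j → P i) :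
    ∃ c ≤ N, ∀ j < N, P j ↔ j < c := by
  classical
  induction N with
  | zero => exact ⟨0, le_rfl, by simp⟩
  | succ N ih =>
    by_cases h : P N
    · refine ⟨N+1, le_rfl, fun j hj => ⟨fun _ => hj, fun _ => hP j N (by omega) (by omega) h⟩⟩
    · obtain ⟨c, hc, h'⟩ := ih (fun i j hij hj => hP i j hij (by omega))
      refine ⟨c, by omega, fun j hj => ?_⟩
      rcases Nat.lt_succ_iff_lt_or_eq.mp hj with h3 | rfl
      · exact h' j h3
      · exact ⟨fun h4 => absurd h4 h, fun h4 => by omega⟩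

theorem AA_facts {k : ℕ} {lam : ℕ → ℤ} (hp : IsPartitionSeq k lam) {r : Fin k → ℤ}
    (hr : r ∈ Fintype.piFinset (AA k lam)) :
    (∀ i < k, extz k r i ≤ lam i) ∧ (∀ i, i + 1 < k → lam (i+1) ≤ extz k r i) ∧
      (∀ i < k, 0 ≤ extz k r i) := by
  rw [Fintype.mem_piFinset] at hr
  simp only [AA, Finset.mem_Icc, lowB] at hr
  refine ⟨fun i hi => ?_, fun i hi => ?_, fun i hi => ?_⟩
  · simp only [extz, hi, dif_pos]; exact (hr ⟨i, hi⟩).2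
  · simp only [extz, Nat.lt_of_succ_lt hi, dif_pos]
    have := (hr ⟨i, Nat.lt_of_succ_lt hi⟩).1
    simpa [hi] using this
  · simp only [extz, hi, dif_pos]
    have := (hr ⟨i, hi⟩).1
    refine le_trans ?_ this
    split_ifs with h
    · exact hp.2 _ h
    · exact le_rfl

theorem extT_entry_iff {k : ℕ} {lam mu : ℕ → ℤ} {a b : ℕ} (hab : a ≤ b + 1) (hp : IsPartitionSeq k lam)
    (h1 : ∀ i < k, mu i ≤ lam i) (h2 : ∀ i, i + 1 < k → lam (i+1) ≤ mu i)
    (S : SSYT k mu a b) (i j : ℕ) (hi : i < k) (hj : (j:ℤ) < lam i) :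
    (extT hab hp h1 h2 S).entry i j ≤ b ↔ (j:ℤ) < mu i := by
  simp only [extT]
  by_cases h : (j:ℤ) < mu i
  · rw [if_pos ⟨hi, h⟩]
    exact ⟨fun _ => h, fun _ => S.upper i j hi h⟩
  · rw [if_neg (by tauto), if_pos ⟨hi, hj⟩]
    exact ⟨fun _ => by omega, fun _ => by omega⟩

/-- The branching map. -/
noncomputable def branch {k : ℕ} {lam : ℕ → ℤ} {a b : ℕ} (hab : a ≤ b + 1) (hp : IsPartitionSeq k lam) :
    (Σ r : {r // r ∈ Fintype.piFinset (AA k lam)}, SSYT k (extz k r.1) a b) → SSYT k lam a (b+1) :=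
  fun p => extT hab hp (AA_facts hp p.1.2).1 (AA_facts hp p.1.2).2.1 p.2

theorem branch_inj {k : ℕ} {lam : ℕ → ℤ} {a b : ℕ} (hab : a ≤ b + 1) (hp : IsPartitionSeq k lam) :
    Function.Injective (branch (a := a) hab hp) := by
  rintro ⟨⟨r, hr⟩, S⟩ ⟨⟨r', hr'⟩, S'⟩ h
  have hrr : r = r' := by
    funext i
    have key : ∀ j : ℕ, (j:ℤ) < lam i → ((j:ℤ) < r i ↔ (j:ℤ) < r' i) := by
      intro j hj
      have e1 := extT_entry_iff hab hp (AA_facts hp hr).1 (AA_facts hp hr).2.1 S i j i.2 hj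
      have e2 := extT_entry_iff hab hp (AA_facts hp hr').1 (AA_facts hp hr').2.1 S' i j i.2 hj
      simp only [branch] at h
      rw [h, e2, extz_coe, extz_coe] at e1
      exact e1.symm
    have a1 := (AA_facts hp hr).1 i i.2
    have a2 := (AA_facts hp hr').1 i i.2
    have a3 := (AA_facts hp hr).2.2 i i.2
    have a4 := (AA_facts hp hr').2.2 i i.2
    rw [extz_coe] at a1 a2 a3 a4
    rcases lt_trichotomy (r i) (r' i) with h5 | h5 | h5
    · have := key (r i).toNat (by omega); omega
    · exact h5
    · have := key (r' i).toNat (by omega); omega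
  subst hrr
  have : S = S' := by
    ext i j
    by_cases hij : i < k ∧ (j:ℤ) < extz k r i
    · have := congrArg (fun T => SSYT.entry T i j) h
      simpa only [branch, extT, if_pos hij] using this
    · rw [S.zero_outside i j hij, S'.zero_outside i j hij]
  rw [this]

theorem branch_surj {k : ℕ} {lam : ℕ → ℤ} {a b : ℕ} (hab : a ≤ b + 1) (hp : IsPartitionSeq k lam) :
    Function.Surjective (branch (a := a) hab hp) := by
  intro T
  have ex : ∀ i : Fin k, ∃ c ≤ (lam i).toNat, ∀ j < (lam i).toNat, T.entry i j ≤ b ↔ j < c := by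
    intro i
    apply exists_cut
    intro j j' hjj hj' h
    exact (T.row_weak i j j' i.2 hjj (by omega)).trans h
  choose c hc hcj using ex
  have hr : (fun i => (c i : ℤ)) ∈ Fintype.piFinset (AA k lam) := by
    rw [Fintype.mem_piFinset]
    intro i
    have h0 := hp.2 i i.2
    have h1 := hc i
    simp only [AA, Finset.mem_Icc, lowB]
    refine ⟨?_, by omega⟩
    split_ifs with h
    · by_contra hlt
      have h3 := hp.1 i h
      have h4 := T.col_strict i (i+1) (c i) (by omega) h (by omega)
      have h5 := T.upper (i+1) (c i) h (by omega)
      have := (hcj i (c i) (by omega)).1 (by omega)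
      omega
    · omega
  have hcut : ∀ i j : ℕ, i < k → (j:ℤ) < lam i → (T.entry i j ≤ b ↔ (j:ℤ) < extz k (fun i => (c i : ℤ)) i) := by
    intro i j hi hj
    have := hcj ⟨i, hi⟩ j (by simp only; omega)
    rw [this]
    simp [extz, hi]
  have hle := (AA_facts hp hr).1
  refine ⟨⟨⟨_, hr⟩, ⟨fun i j => if i < k ∧ (j:ℤ) < extz k (fun i => (c i : ℤ)) i then T.entry i j else 0,
    ?_, ?_, ?_, ?_, ?_⟩⟩, ?_⟩
  · intro i j h; rw [if_neg h]
  · intro i j h h'; rw [if_pos ⟨h, h'⟩]; exact T.lower i j h (h'.trans_le (hle i h))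
  · intro i j h h'; rw [if_pos ⟨h, h'⟩]; exact (hcut i j h (h'.trans_le (hle i h))).2 h'
  · intro i j j' h hj h'
    rw [if_pos ⟨h, lt_of_le_of_lt (by exact_mod_cast hj) h'⟩, if_pos ⟨h, h'⟩]; exact T.row_weak i j j' h hj (h'.trans_le (hle i h))
  · intro i i' j hi hi' hj
    have e1 := T.col_strict i i' j hi hi' (hj.trans_le (hle i' hi'))
    have e2 := (hcut i' j hi' (hj.trans_le (hle i' hi'))).2 hj
    have e3 : (j:ℤ) < lam i := by
      by_contra hcon
      have anti : ∀ d, i + d < k → lam (i + d) ≤ lam i := by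
        intro d
        induction d with
        | zero => simp
        | succ d ih => intro h; exact (hp.1 _ h).trans (ih (by omega))
      have h3 := anti (i' - i) (by omega)
      rw [show i + (i' - i) = i' by omega] at h3
      have := hj.trans_le (hle i' hi')
      omega
    have e4 := (hcut i j (by omega) e3).1 (by omega)
    rw [if_pos ⟨by omega, e4⟩, if_pos ⟨hi', hj⟩]
    exact e1
  · ext i j
    simp only [branch, extT]
    split_ifs with h1 h2
    · rfl
    · have := hcut i j h2.1 h2.2
      have := T.upper i j h2.1 h2.2
      have : ¬ (j:ℤ) < extz k (fun i => (c i : ℤ)) i := fun h => h1 ⟨h2.1, h⟩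
      have : ¬ T.entry i j ≤ b := by tauto
      omega
    · exact (T.zero_outside i j h2).symm

theorem jacobi_trudi_aux (k a d b : ℕ) (ha : 1 ≤ a) (hb : b + 1 = a + d) : ∀ lam : ℕ → ℤ, IsPartitionSeq k lam →
    Finite (SSYT k lam a b) ∧ ∑ᶠ T : SSYT k lam a b, T.weight = JT k lam a b := by
  induction d generalizing b with
  | zero =>
    intro lam hp
    rw [JT_base k lam a b (by omega) hp]
    have hsub : Subsingleton (SSYT k lam a b) := by
      refine ⟨fun S T => ?_⟩
      ext i j
      by_cases h : i < k ∧ (j:ℤ) < lam i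
      · have := S.lower i j h.1 h.2
        have := S.upper i j h.1 h.2
        omega
      · rw [S.zero_outside i j h, T.zero_outside i j h]
    refine ⟨inferInstance, ?_⟩
    split_ifs with h
    · let T : SSYT k lam a b := ⟨fun _ _ => 0, fun _ _ _ => rfl,
        fun i j hi hj => by have := h i hi; omega,
        fun i j hi hj => by have := h i hi; omega,
        fun i _ j hi _ hj => by have := h i hi; omega,
        fun i i' j _ hi hj => by have := h i' hi; omega⟩
      haveI : Unique (SSYT k lam a b) := ⟨⟨T⟩, fun _ => Subsingleton.elim _ _⟩
      rw [finsum_unique, SSYT.weight]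
      refine Finset.prod_eq_one fun i hi => ?_
      rw [h i (Finset.mem_range.1 hi)]
      simp
    · haveI : IsEmpty (SSYT k lam a b) := by
        refine ⟨fun S => h fun i hi => ?_⟩
        by_contra h0
        have := hp.2 i hi
        have := S.lower i 0 hi (by simp only [Nat.cast_zero]; omega)
        have := S.upper i 0 hi (by simp only [Nat.cast_zero]; omega)
        omega
      exact finsum_of_isEmpty _
  | succ d ih =>
    intro lam hp
    obtain ⟨b, rfl⟩ : ∃ b', b = b' + 1 := by
      cases b with
      | zero => omega
      | succ b => exact ⟨b, rfl⟩
    have hab : a ≤ b + 1 := by omega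
    have hpart : ∀ r : {r // r ∈ Fintype.piFinset (AA k lam)}, IsPartitionSeq k (extz k r.1) := by
      intro r
      obtain ⟨h1, h2, h3⟩ := AA_facts hp r.2
      exact ⟨fun i hi => (h1 _ hi).trans (h2 i hi), h3⟩
    haveI hfin : ∀ r : {r // r ∈ Fintype.piFinset (AA k lam)}, Finite (SSYT k (extz k r.1) a b) :=
      fun r => (ih b (by omega) _ (hpart r)).1
    let e := Equiv.ofBijective (branch (a := a) hab hp) ⟨branch_inj hab hp, branch_surj hab hp⟩
    haveI : ∀ r : {r // r ∈ Fintype.piFinset (AA k lam)}, Fintype (SSYT k (extz k r.1) a b) :=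
      fun r => Fintype.ofFinite _
    haveI : Fintype (SSYT k lam a (b+1)) := Fintype.ofEquiv _ e
    refine ⟨inferInstance, ?_⟩
    rw [finsum_eq_sum_of_fintype, ← Equiv.sum_comp e, Fintype.sum_sigma, JT_step k lam a b hab hp,
      ← Finset.sum_coe_sort (Fintype.piFinset (AA k lam))]
    refine Finset.sum_congr rfl fun r _ => ?_
    rw [← (ih b (by omega) _ (hpart r)).2, finsum_eq_sum_of_fintype, Finset.mul_sum]
    refine Finset.sum_congr rfl fun S _ => ?_
    have := extT_weight hab hp (AA_facts hp r.2).1 (AA_facts hp r.2).2.1 (AA_facts hp r.2).2.2 S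
    refine this.trans ?_
    simp only [extz_coe]

theorem schur_eq (k : ℕ) (lam : ℕ → ℤ) (a b : ℕ) (hab : a ≤ b + 1) (ha : 1 ≤ a)
    (hp : IsPartitionSeq k lam) : schur k lam a b = JT k lam a b := by
  rw [schur, if_pos hp]
  exact (jacobi_trudi_aux k a (b + 1 - a) b ha (by omega) lam hp).2

theorem plucker {R : Type*} [CommRing R] (p : ℕ) (lam : ℕ → ℤ) (H G : ℤ → R) (x : R)
    (hG : ∀ m, G m = H m - x * H (m - 1)) :
    (Matrix.of fun i j : Fin (p+2) => H (lam i - i + j)).det *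
      (Matrix.of fun i j : Fin (p+1) => G (lam i - i + j)).det =
    (Matrix.of fun i j : Fin (p+2) => G (lam i - i + j)).det *
      (Matrix.of fun i j : Fin (p+1) => H (lam i - i + j)).det +
    x * (Matrix.of fun i j : Fin (p+2) => H (lam i - 1 - i + j)).det *
      (Matrix.of fun i j : Fin (p+1) => G (lam i + 1 - i + j)).det := by
  -- column operations
  have col : ∀ (q : ℕ) (f : ℕ → ℤ), (Matrix.of fun i j : Fin (q+1) => H (f i - i + j)).det =
      (Matrix.of fun i j : Fin (q+1) => if j = 0 then H (f i - i) else G (f i - i + j)).det := by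
    intro q f
    apply Matrix.det_eq_of_forall_col_eq_smul_add_pred (fun _ => x)
    · intro i; simp
    · intro i j
      simp only [Matrix.of_apply, Fin.succ_ne_zero, if_false, hG]
      rw [show f i - i + ((j.succ : Fin (q+1)) : ℕ) - 1 = f i - i + ((j.castSucc : Fin (q+1)) : ℕ) by simp; ring]
      ring
  set A : Matrix (Fin (p+2)) (Fin (p+2)) R :=
    Matrix.of fun i j : Fin (p+2) => if j = 0 then H (lam i - i) else G (lam i - i + j) with hA
  set B : Matrix (Fin (p+1)) (Fin (p+1)) R :=
    Matrix.of fun i j : Fin (p+1) => if j = 0 then H (lam i - i) else G (lam i - i + j) with hB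
  set w : Fin (p+2) → R := fun i => G (lam i - i) with hw
  let φ : (Fin (p+2) → R) → R := fun u => B.cramer (fun i => u i.castSucc) 0
  have cr := congrArg φ (Matrix.mulVec_cramer A w)
  have φsmul : ∀ (c : R) u, φ (c • u) = c * φ u := by
    intro c u
    simp only [φ]
    rw [show (fun i : Fin (p+1) => (c • u) i.castSucc) = c • (fun i : Fin (p+1) => u i.castSucc) from rfl, map_smul]
    rfl
  have φsum : ∀ c : Fin (p+2) → R, φ (A.mulVec c) = ∑ j, c j * φ (fun i => A i j) := by
    intro c
    have : (fun i : Fin (p+1) => (A.mulVec c) i.castSucc) = ∑ j, c j • (fun i : Fin (p+1) => A i.castSucc j) := by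
      funext i
      simp [Matrix.mulVec, dotProduct, mul_comm]
    simp only [φ]
    rw [this, map_sum, Finset.sum_apply]
    simp
  rw [φsmul, φsum, Fin.sum_univ_succ, Fin.sum_univ_castSucc] at cr
  have mid : ∀ j : Fin p, φ (fun i => A i (j.castSucc.succ)) = 0 := by
    intro j
    simp only [φ, Matrix.cramer_apply]
    apply Matrix.det_zero_of_column_eq (i := 0) (j := j.succ) (Fin.succ_ne_zero j).symm
    intro i
    rw [Matrix.updateCol_self, Matrix.updateCol_ne (Fin.succ_ne_zero j)]
    simp [hA, hB]
  simp only [mid, mul_zero, Finset.sum_const_zero, zero_add] at cr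
  -- identify the terms
  have t1 : φ w = (Matrix.of fun i j : Fin (p+1) => G (lam i - i + j)).det := by
    simp only [φ, Matrix.cramer_apply]
    congr 1
    ext i j
    rw [Matrix.updateCol_apply]
    split_ifs with h
    · subst h; simp [hw]
    · simp [hB, h]
  have t2 : φ (fun i => A i 0) = B.det := by
    simp only [φ, Matrix.cramer_apply]
    congr 1
    ext i j
    rw [Matrix.updateCol_apply]
    split_ifs with h
    · subst h; simp [hA, hB]
    · rfl
  have t3 : A.cramer w 0 = (Matrix.of fun i j : Fin (p+2) => G (lam i - i + j)).det := by
    rw [Matrix.cramer_apply]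
    congr 1
    ext i j
    rw [Matrix.updateCol_apply]
    split_ifs with h
    · subst h; simp [hw]
    · simp [hA, h]
  set τ : Equiv.Perm (Fin (p+1)) := finRotate (p+1) with hτ
  set s : R := ((Equiv.Perm.sign τ : ℤ) : R) with hs
  have hss : s * s = 1 := by
    rw [hs, ← Int.cast_mul, ← Units.val_mul, Int.units_mul_self]; simp
  have t4 : (Matrix.of fun i j : Fin (p+1) => G (lam i + 1 - i + j)).det = s * φ (fun i => A i (Fin.last p).succ) := by
    simp only [φ, Matrix.cramer_apply]
    rw [hs, ← Matrix.det_permute']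
    congr 1
    ext i j
    rw [Matrix.submatrix_apply, Matrix.updateCol_apply, id]
    induction j using Fin.lastCases with
    | last =>
      simp [hτ, hA]
      congr 1; ring
    | cast j =>
      have : τ j.castSucc = j.succ := by
        rw [hτ, finRotate_apply, Fin.coeSucc_eq_succ]
      rw [this, if_neg (Fin.succ_ne_zero j)]
      simp [hB]
      congr 1; ring
  have t5 : x * (Matrix.of fun i j : Fin (p+2) => H (lam i - 1 - i + j)).det = s * A.cramer w (Fin.last p).succ := by
    rw [col (p+1) (fun i => lam i - 1), Matrix.cramer_apply]
    set σ : Equiv.Perm (Fin (p+2)) := Equiv.Perm.decomposeFin.symm (0, τ) with hσ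
    have hsg : Equiv.Perm.sign σ = Equiv.Perm.sign τ := by
      rw [hσ, Equiv.Perm.decomposeFin.symm_sign]; simp
    set N : Matrix (Fin (p+2)) (Fin (p+2)) R :=
      Matrix.of fun i j => if j = 0 then H (lam i - i) else G (lam i - i + j - 1) with hN
    have e1 : A.updateCol (Fin.last p).succ w = N.submatrix id σ := by
      ext i j
      rw [Matrix.submatrix_apply, Matrix.updateCol_apply, id]
      induction j using Fin.cases with
      | zero =>
        rw [if_neg (Fin.succ_ne_zero _).symm]
        simp [hA, hN, hσ]
      | succ j =>
        have hj : σ j.succ = (τ j).succ := by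
          rw [hσ, Equiv.Perm.decomposeFin_symm_apply_succ]; simp
        rw [hj]
        induction j using Fin.lastCases with
        | last => simp [hτ, hN, hw]
        | cast j =>
          have h3 : τ j.castSucc = j.succ := by
            rw [hτ, finRotate_apply, Fin.coeSucc_eq_succ]
          have h4 : (j.castSucc.succ : Fin (p+2)) ≠ (Fin.last p).succ := by
            intro h
            exact (Fin.castSucc_lt_last j).ne (Fin.succ_injective _ h)
          rw [h3, if_neg h4]
          simp [hA, hN]
          congr 1; ring
    have e2 : s * (A.updateCol (Fin.last p).succ w).det = N.det := by
      rw [e1, Matrix.det_permute', hsg, ← hs, ← mul_assoc, hss, one_mul]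
    rw [e2]
    have e3 : N = N.updateCol 0 (x • (fun i : Fin (p+2) => H (lam i - 1 - i)) + w) := by
      ext i j
      rw [Matrix.updateCol_apply]
      split_ifs with h
      · subst h
        simp [hN, hw, hG]
        rw [show lam i - (i:ℤ) - 1 = lam i - 1 - i by ring]
        ring
      · rfl
    have e4 : (N.updateCol 0 w).det = 0 := by
      apply Matrix.det_zero_of_column_eq (i := 0) (j := 1) (by simp)
      intro i
      rw [Matrix.updateCol_self, Matrix.updateCol_ne (by simp)]
      simp [hN, hw]
    rw [e3, Matrix.det_updateCol_add, Matrix.det_updateCol_smul, e4, add_zero]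
    congr 2
    ext i j
    rw [Matrix.updateCol_apply]
    simp only [hN, Matrix.of_apply]
    split_ifs with h
    · rfl
    · congr 1; ring
  rw [col (p+1) lam, col p lam]
  rw [t1, t2, t3] at cr
  rw [t5, t4]
  linear_combination -cr - (A.cramer w (Fin.last p).succ * φ (fun i => A i (Fin.last p).succ)) * hss

/-- for a partition `λ = (λ_1 ≥ … ≥ λ_k ≥ 1)` and `n ≥ k`:
`s^{[n]}_λ · s^{[2,n]}_{(λ_1,…,λ_{k-1})} = s^{[2,n]}_λ · s^{[n]}_{(λ_1,…,λ_{k-1})}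
 + x_1 · s^{[n]}_{(λ_1-1,…,λ_k-1)} · s^{[2,n]}_{(λ_1+1,…,λ_{k-1}+1)}`. -/
theorem stmt_12 (k n : ℕ) (hk : 1 ≤ k) (hn : k ≤ n) (lam : ℕ → ℤ)
    (hdec : ∀ i, i + 1 < k → lam (i + 1) ≤ lam i) (hpos : ∀ i, i < k → 1 ≤ lam i) :
    schur k lam 1 n * schur (k - 1) lam 2 n =
      schur k lam 2 n * schur (k - 1) lam 1 n +
        MvPolynomial.X 1 * schur k (fun j => lam j - 1) 1 n *
          schur (k - 1) (fun j => lam j + 1) 2 n := by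
  have p1 : IsPartitionSeq k lam := ⟨hdec, fun i hi => by have := hpos i hi; omega⟩
  have p2 : IsPartitionSeq (k-1) lam := ⟨fun i hi => hdec i (by omega), fun i hi => p1.2 i (by omega)⟩
  have p3 : IsPartitionSeq k (fun j => lam j - 1) :=
    ⟨fun i hi => by have := hdec i hi; simp only; omega, fun i hi => by have := hpos i hi; simp only; omega⟩
  have p4 : IsPartitionSeq (k-1) (fun j => lam j + 1) :=
    ⟨fun i hi => by have := hdec i (by omega); simp only; omega,
      fun i hi => by have := hpos i (by omega); simp only; omega⟩
  rw [schur_eq k lam 1 n (by omega) (by omega) p1, schur_eq k lam 2 n (by omega) (by omega) p1,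
    schur_eq (k-1) lam 1 n (by omega) (by omega) p2, schur_eq (k-1) lam 2 n (by omega) (by omega) p2,
    schur_eq k _ 1 n (by omega) (by omega) p3, schur_eq (k-1) _ 2 n (by omega) (by omega) p4]
  obtain rfl | ⟨p, rfl⟩ : k = 1 ∨ ∃ p, k = p + 2 := by
    rcases k with _ | _ | p
    · omega
    · exact Or.inl rfl
    · exact Or.inr ⟨p, rfl⟩
  · simp only [JT, Nat.sub_self, Matrix.det_isEmpty, Matrix.det_unique, Matrix.of_apply]
    simp [hh_bot n hn]
  · exact plucker p lam (hh 1 n) (hh 2 n) (MvPolynomial.X 1) (hh_bot n (by omega))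
end

section
/- Let c, r ≥ 1 and n ≥ 1. Then, as polynomials in x_1,…,x_n (Kirillov's identity): ( s^{[n]}_{c^r} )² = s^{[n]}_{c^{r−1}} · s^{[n]}_{c^{r+1}} + s^{[n]}_{(c−1)^r} · s^{[n]}_{(c+1)^r}. -/
open Finset in
theorem kir_jacobi {m l R : Type*} [Fintype m] [DecidableEq m] [Fintype l] [DecidableEq l] [CommRing R]
    (M : Matrix (m ⊕ l) (m ⊕ l) R) :
    M.toBlocks₁₁.det * M.det ^ Fintype.card l = M.det * M.adjugate.toBlocks₂₂.det := by
  have h1 : M * Matrix.fromBlocks 1 M.adjugate.toBlocks₁₂ 0 M.adjugate.toBlocks₂₂ =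
      Matrix.fromBlocks M.toBlocks₁₁ 0 M.toBlocks₂₁ (M.det • (1 : Matrix l l R)) := by
    have h2 := Matrix.mul_adjugate M
    ext i j
    have h3 := congrFun (congrFun h2 i) j
    rcases i with i | i <;> rcases j with j | j <;>
      simp [Matrix.mul_apply, Matrix.toBlocks₁₁, Matrix.toBlocks₁₂, Matrix.toBlocks₂₁, Matrix.toBlocks₂₂, Matrix.one_apply] at h3 ⊢
    · exact h3
    · exact h3
  have h4 := congrArg Matrix.det h1
  rw [Matrix.det_mul, Matrix.det_fromBlocks_zero₂₁, Matrix.det_fromBlocks_zero₁₂] at h4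
  simpa using h4.symm

theorem kir_jacobi2 {m R : Type*} [Fintype m] [DecidableEq m] [CommRing R]
    (M : Matrix (m ⊕ Fin 2) (m ⊕ Fin 2) R) :
    M.toBlocks₁₁.det * M.det = M.adjugate.toBlocks₂₂.det := by
  have key : (Matrix.mvPolynomialX (m ⊕ Fin 2) (m ⊕ Fin 2) ℤ).toBlocks₁₁.det *
      (Matrix.mvPolynomialX (m ⊕ Fin 2) (m ⊕ Fin 2) ℤ).det =
      (Matrix.mvPolynomialX (m ⊕ Fin 2) (m ⊕ Fin 2) ℤ).adjugate.toBlocks₂₂.det := by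
    have h := kir_jacobi (Matrix.mvPolynomialX (m ⊕ Fin 2) (m ⊕ Fin 2) ℤ)
    apply mul_left_cancel₀ (Matrix.det_mvPolynomialX_ne_zero (m ⊕ Fin 2) ℤ)
    rw [← h, Fintype.card_fin]; ring
  let φ : MvPolynomial ((m ⊕ Fin 2) × (m ⊕ Fin 2)) ℤ →+* R :=
    MvPolynomial.eval₂Hom (Int.castRingHom R) (fun p => M p.1 p.2)
  have hφ : φ.mapMatrix (Matrix.mvPolynomialX (m ⊕ Fin 2) (m ⊕ Fin 2) ℤ) = M := by
    ext i j; simp [φ, Matrix.mvPolynomialX]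
  have h := congrArg φ key
  rw [map_mul, RingHom.map_det, RingHom.map_det, RingHom.map_det, hφ] at h
  have h1 : φ.mapMatrix (Matrix.mvPolynomialX (m ⊕ Fin 2) (m ⊕ Fin 2) ℤ).toBlocks₁₁ = M.toBlocks₁₁ := by
    conv_rhs => rw [← hφ]
    rfl
  have h2 : φ.mapMatrix (Matrix.mvPolynomialX (m ⊕ Fin 2) (m ⊕ Fin 2) ℤ).adjugate.toBlocks₂₂ = M.adjugate.toBlocks₂₂ := by
    conv_rhs => rw [← hφ, ← RingHom.map_adjugate]
    rfl
  rw [h1, h2] at h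
  exact h

/-- Dodgson condensation. -/
theorem kir_dodgson {k : ℕ} {R : Type*} [CommRing R] (M : Matrix (Fin (k+2)) (Fin (k+2)) R) :
    (M.submatrix (fun i : Fin k => i.castSucc.succ) (fun i : Fin k => i.castSucc.succ)).det * M.det =
      (M.submatrix Fin.succ Fin.succ).det * (M.submatrix Fin.castSucc Fin.castSucc).det -
      (M.submatrix Fin.succ Fin.castSucc).det * (M.submatrix Fin.castSucc Fin.succ).det := by
  let f : Fin k ⊕ Fin 2 → Fin (k+2) := Sum.elim (fun i => i.castSucc.succ) ![0, Fin.last _]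
  have hf : Function.Bijective f := by
    rw [Fintype.bijective_iff_injective_and_card]
    refine ⟨?_, by simp⟩
    rintro (a | a) (b | b) h
    · simpa [f] using h
    · exfalso; fin_cases b <;> simp [f, Fin.ext_iff] at h; omega
    · exfalso; fin_cases a <;> simp [f, Fin.ext_iff] at h; omega
    · fin_cases a <;> fin_cases b <;> simp [f, Fin.ext_iff] at h ⊢
  let e := Equiv.ofBijective f hf
  have h := kir_jacobi2 (M.submatrix e e)
  rw [Matrix.det_submatrix_equiv_self, Matrix.adjugate_submatrix_equiv_self, Matrix.det_fin_two] at h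
  have e0 : e (Sum.inr 0) = 0 := rfl
  have e1 : e (Sum.inr 1) = Fin.last _ := rfl
  have h11 : (M.submatrix e e).toBlocks₁₁ = M.submatrix (fun i : Fin k => i.castSucc.succ) (fun i : Fin k => i.castSucc.succ) := rfl
  rw [h11] at h
  rw [h]
  simp only [Matrix.toBlocks₂₂, Matrix.of_apply, Matrix.submatrix_apply, e0, e1, Matrix.adjugate_fin_succ_eq_det_submatrix]
  have s0 : (Fin.succAbove (0 : Fin (k+2))) = Fin.succ := by ext i; simp
  have s1 : (Fin.succAbove (Fin.last (k+1))) = Fin.castSucc := by ext i; simp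
  rw [s0, s1]
  have hs : ((-1 : R) ^ (k+1)) * (-1)^(k+1) = 1 := by rw [← mul_pow]; simp
  simp only [Fin.val_zero, Fin.val_last, add_zero, zero_add, pow_zero, pow_add _ (k+1) (k+1)]
  linear_combination ((M.submatrix Fin.succ Fin.succ).det * (M.submatrix Fin.castSucc Fin.castSucc).det -
      (M.submatrix Fin.succ Fin.castSucc).det * (M.submatrix Fin.castSucc Fin.succ).det) * hs
/-- complete homogeneous polynomials -/
noncomputable def kirH : ℕ → ℤ → MvPolynomial ℕ ℤ
  | 0, m => if m = 0 then 1 else 0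
  | n + 1, m => ∑ t ∈ Finset.range (m.toNat + 1), MvPolynomial.X (n+1) ^ t * kirH n (m - t)

theorem kirH_neg (n : ℕ) : ∀ m : ℤ, m < 0 → kirH n m = 0 := by
  induction n with
  | zero => intro m hm; simp [kirH, hm.ne]
  | succ n ih =>
    intro m hm
    rw [kirH]
    apply Finset.sum_eq_zero
    intro t _
    rw [ih _ (by omega), mul_zero]

theorem kirH_rec (n : ℕ) (m : ℤ) :
    kirH (n+1) m = kirH n m + MvPolynomial.X (n+1) * kirH (n+1) (m-1) := by
  rcases lt_trichotomy m 0 with h | h | h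
  · rw [kirH_neg _ _ h, kirH_neg _ _ h, kirH_neg _ _ (by omega)]; simp
  · subst h
    rw [kirH_neg _ (0-1) (by omega)]; simp [kirH]
  · obtain ⟨p, rfl⟩ : ∃ p : ℕ, m = p + 1 := ⟨(m-1).toNat, by omega⟩
    rw [kirH, kirH]
    have h1 : ((p:ℤ)+1).toNat = p + 1 := by omega
    have h2 : ((p:ℤ)+1-1).toNat = p := by omega
    rw [h1, h2, Finset.sum_range_succ', add_comm, Finset.mul_sum]
    congr 1
    · simp
    · apply Finset.sum_congr rfl
      intro t _
      rw [pow_succ']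
      have : ((p:ℤ)+1-((t+1 : ℕ):ℤ)) = (p:ℤ)+1-1-t := by push_cast; ring
      rw [this]; ring

theorem kirH_sub (n d : ℕ) (m : ℤ) :
    kirH (n+1) m - MvPolynomial.X (n+1) ^ d * kirH (n+1) (m - d) =
      ∑ t ∈ Finset.range d, MvPolynomial.X (n+1) ^ t * kirH n (m - t) := by
  induction d with
  | zero => simp
  | succ d ih =>
    rw [Finset.sum_range_succ, ← ih, kirH_rec n (m - d)]
    have : m - d - 1 = m - ((d+1 : ℕ):ℤ) := by push_cast; ring
    rw [this]; ring

/-- next part, zero past the end -/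
def kirNxt (k : ℕ) (lam : ℕ → ℤ) (i : ℕ) : ℤ := if i + 1 < k then lam (i+1) else 0

noncomputable def kirJT (k : ℕ) (lam : ℕ → ℤ) (n : ℕ) : Matrix (Fin k) (Fin k) (MvPolynomial ℕ ℤ) :=
  fun i j => kirH n (lam i - i + j)

def kirExt (k : ℕ) (mu : Fin k → ℤ) (i : ℕ) : ℤ := if h : i < k then mu ⟨i, h⟩ else 0

noncomputable def kirBox (k : ℕ) (lam : ℕ → ℤ) : Finset (Fin k → ℤ) :=
  Fintype.piFinset (fun i : Fin k => Finset.Icc (kirNxt k lam i) (lam i))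

theorem kirNxt_le {k : ℕ} {lam : ℕ → ℤ} (hl : IsPartitionSeq k lam) (i : ℕ) (hi : i < k) :
    kirNxt k lam i ≤ lam i := by
  unfold kirNxt
  split_ifs with h
  · exact hl.1 i h
  · exact hl.2 i hi

theorem kirNxt_nonneg {k : ℕ} {lam : ℕ → ℤ} (hl : IsPartitionSeq k lam) (i : ℕ) :
    0 ≤ kirNxt k lam i := by
  unfold kirNxt
  split_ifs with h
  · exact hl.2 _ h
  · exact le_rfl

theorem kirB_entry (n : ℕ) (a b : ℤ) (hab : b ≤ a) (s : ℤ) :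
    kirH (n+1) (a + s) - MvPolynomial.X (n+1) ^ (a - b + 1).toNat * kirH (n+1) (b - 1 + s) =
      ∑ u ∈ Finset.Icc b a, MvPolynomial.X (n+1) ^ (a - u).toNat * kirH n (u + s) := by
  have h := kirH_sub n (a - b + 1).toNat (a + s)
  have h1 : a + s - ((a - b + 1).toNat : ℤ) = b - 1 + s := by omega
  rw [h1] at h
  rw [h]
  refine Finset.sum_bij' (fun t _ => a - t) (fun u _ => (a - u).toNat) ?_ ?_ ?_ ?_ ?_
  · intro t ht; simp only [Finset.mem_range, Finset.mem_Icc] at *; omega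
  · intro t ht; simp only [Finset.mem_range, Finset.mem_Icc] at *; omega
  · intro t ht; simp
  · intro t ht; simp only [Finset.mem_Icc] at *; omega
  · intro t ht
    have e1 : (a - (a - (t:ℤ))).toNat = t := by omega
    have e2 : a - (t:ℤ) + s = a + s - t := by ring
    rw [e1, e2]

theorem kirJT_branch (k n : ℕ) (lam : ℕ → ℤ) (hl : IsPartitionSeq k lam) :
    (kirJT k lam (n+1)).det = ∑ mu ∈ kirBox k lam,
      (∏ i : Fin k, MvPolynomial.X (n+1) ^ (lam i - mu i).toNat) * (kirJT k (kirExt k mu) n).det := by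
  let d : ℕ → ℕ := fun i => (lam i - kirNxt k lam i + 1).toNat
  let U : Matrix (Fin k) (Fin k) (MvPolynomial ℕ ℤ) := fun i j =>
    (if j = i then 1 else 0) - (if (j : ℕ) = i + 1 then MvPolynomial.X (n+1) ^ d i else 0)
  have hU : U.det = 1 := by
    rw [Matrix.det_of_isUpperTriangular]
    · apply Finset.prod_eq_one
      intro i _
      simp [U]
    · intro i j hij
      simp only [id] at hij
      have h1 : j ≠ i := by rintro rfl; exact lt_irrefl _ hij
      have h2 : ¬ ((j : ℕ) = i + 1) := by have : (j:ℕ) < i := hij; omega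
      simp [U, h1, h2]
  have hB : U * kirJT k lam (n+1) = fun i : Fin k => ∑ u ∈ Finset.Icc (kirNxt k lam i) (lam i),
      (fun j : Fin k => MvPolynomial.X (n+1) ^ (lam i - u).toNat * kirH n (u - i + j)) := by
    refine Matrix.ext fun i j => ?_
    rw [Finset.sum_apply]
    have h := kirB_entry n (lam i) (kirNxt k lam i) (kirNxt_le hl i i.2) (-(i:ℤ) + j)
    have e : ∀ u : ℤ, u - i + j = u + (-(i:ℤ) + j) := fun u => by ring
    simp only [e]
    rw [← h, Matrix.mul_apply]
    simp only [U, sub_mul, Finset.sum_sub_distrib, ite_mul, one_mul, zero_mul, Finset.sum_ite_eq', Finset.mem_univ, if_true]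
    congr 1
    · simp only [kirJT, e]
    · by_cases hi : (i:ℕ) + 1 < k
      · rw [Finset.sum_eq_single (⟨i+1, hi⟩ : Fin k)]
        · simp only [if_true, kirJT, kirNxt, hi, d]
          congr 2
          push_cast; ring
        · intro b _ hb
          rw [if_neg]
          intro h'; exact hb (Fin.ext h')
        · simp
      · rw [Finset.sum_eq_zero]
        · rw [kirH_neg, mul_zero]
          simp only [kirNxt, hi, if_false]
          have := j.2
          omega
        · intro b _
          rw [if_neg]
          have := b.2
          omega
  have h1 : (kirJT k lam (n+1)).det = (U * kirJT k lam (n+1)).det := by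
    rw [Matrix.det_mul, hU, one_mul]
  rw [h1, hB]
  have h2 := (Matrix.detRowAlternating (n := Fin k) (R := MvPolynomial ℕ ℤ)).toMultilinearMap.map_sum_finset
    (fun (i : Fin k) (u : ℤ) => (fun j : Fin k => (MvPolynomial.X (n+1) ^ (lam i - u).toNat * kirH n (u - i + j) : MvPolynomial ℕ ℤ)))
    (fun i : Fin k => Finset.Icc (kirNxt k lam i) (lam i))
  refine Eq.trans h2 ?_
  unfold kirBox
  apply Finset.sum_congr rfl
  intro mu _
  have h3 := Matrix.det_mul_column (fun i : Fin k => (MvPolynomial.X (n+1) ^ (lam i - mu i).toNat : MvPolynomial ℕ ℤ)) (kirJT k (kirExt k mu) n)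
  rw [← h3]
  change Matrix.det _ = _
  congr 1
  refine Matrix.ext fun i j => ?_
  simp [kirJT, kirExt]

theorem kirJT_zero (k : ℕ) (lam : ℕ → ℤ) (h0 : ∀ i < k, lam i = 0) :
    (kirJT k lam 0).det = 1 := by
  rw [Matrix.det_of_isUpperTriangular]
  · apply Finset.prod_eq_one
    intro i _
    simp [kirJT, kirH, h0 i i.2]
  · intro i j hij
    have : (j:ℕ) < i := hij
    simp only [kirJT, h0 i i.2]
    exact kirH_neg _ _ (by omega)

theorem kirJT_zero' (k : ℕ) (lam : ℕ → ℤ) (h0 : 0 < k) (h1 : 0 < lam 0) :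
    (kirJT k lam 0).det = 0 := by
  apply Matrix.det_eq_zero_of_row_eq_zero (⟨0, h0⟩ : Fin k)
  intro j
  simp only [kirJT, kirH]
  rw [if_neg]
  simp; omega
theorem kir_ssyt_ext {k : ℕ} {lam : ℕ → ℤ} {a b : ℕ} {S T : SSYT k lam a b}
    (h : S.entry = T.entry) : S = T := by
  cases S; cases T; cases h; rfl

instance kir_ssyt_finite (k : ℕ) (lam : ℕ → ℤ) (a b : ℕ) : Finite (SSYT k lam a b) := by
  let f : SSYT k lam a b → ((i : Fin k) → Fin (lam i).toNat → Fin (b+1)) := fun T i j =>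
    ⟨T.entry i j, by
      have := T.upper i j i.2 (by have := j.2; omega)
      omega⟩
  apply Finite.of_injective f
  intro S T h
  apply kir_ssyt_ext
  funext i j
  by_cases hij : i < k ∧ (j : ℤ) < lam i
  · have h1 := congrFun (congrFun h ⟨i, hij.1⟩) ⟨j, by have := hij.2; simp only; omega⟩
    simpa [f] using h1
  · rw [S.zero_outside i j hij, T.zero_outside i j hij]

/-- number of entries at most `n` in row `i` -/
def kirShape {k : ℕ} {lam : ℕ → ℤ} {n : ℕ} (T : SSYT k lam 1 (n+1)) (i : Fin k) : ℤ :=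
  (((Finset.range (lam i).toNat).filter (fun j => T.entry i j ≤ n)).card : ℤ)

/-- an initial-segment predicate is determined by its count -/
theorem kir_count (N : ℕ) (p : ℕ → Prop) [DecidablePred p]
    (hp : ∀ a b, a ≤ b → b < N → p b → p a) (j : ℕ) (hj : j < N) :
    p j ↔ j < ((Finset.range N).filter p).card := by
  constructor
  · intro h
    have : Finset.range (j+1) ⊆ (Finset.range N).filter p := by
      intro a ha
      simp only [Finset.mem_range, Finset.mem_filter] at *
      exact ⟨by omega, hp a j (by omega) hj h⟩
    have := Finset.card_le_card this
    rw [Finset.card_range] at this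
    omega
  · intro h
    by_contra hn
    have : (Finset.range N).filter p ⊆ Finset.range j := by
      intro a ha
      simp only [Finset.mem_range, Finset.mem_filter] at *
      by_contra h'
      exact hn (hp j a (by omega) ha.1 ha.2)
    have := Finset.card_le_card this
    rw [Finset.card_range] at this
    omega

theorem kirShape_iff {k : ℕ} {lam : ℕ → ℤ} {n : ℕ} (T : SSYT k lam 1 (n+1)) (i : Fin k) (j : ℕ)
    (hj : (j : ℤ) < lam i) : T.entry i j ≤ n ↔ (j : ℤ) < kirShape T i := by
  unfold kirShape
  rw [kir_count (lam i).toNat (fun j => T.entry i j ≤ n) _ j (by omega)]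
  · exact Nat.cast_lt.symm
  · intro a b hab hb h
    exact le_trans (T.row_weak i a b i.2 hab (by omega)) h

theorem kirShape_le {k : ℕ} {lam : ℕ → ℤ} {n : ℕ} (hl : IsPartitionSeq k lam)
    (T : SSYT k lam 1 (n+1)) (i : Fin k) : kirShape T i ≤ lam i := by
  unfold kirShape
  have h := Finset.card_filter_le (Finset.range (lam i).toNat) (fun j => T.entry i j ≤ n)
  rw [Finset.card_range] at h
  have := hl.2 i i.2
  omega

theorem kirShape_mem {k : ℕ} {lam : ℕ → ℤ} {n : ℕ} (hl : IsPartitionSeq k lam)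
    (T : SSYT k lam 1 (n+1)) : kirShape T ∈ kirBox k lam := by
  unfold kirBox
  rw [Fintype.mem_piFinset]
  intro i
  rw [Finset.mem_Icc]
  refine ⟨?_, kirShape_le hl T i⟩
  unfold kirNxt
  split_ifs with h
  · by_contra hlt
    push Not at hlt
    have h0 : 0 ≤ kirShape T i := by unfold kirShape; positivity
    have h1 := hl.1 i h
    have h2 : ((kirShape T i).toNat : ℤ) < lam (i+1) := by omega
    have h3 := T.col_strict i (i+1) (kirShape T i).toNat (by omega) h h2
    have h4 := T.upper (i+1) _ h h2
    have h5 := (kirShape_iff T i (kirShape T i).toNat (by omega)).1 (by omega)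
    omega
  · unfold kirShape; positivity

theorem kirExt_lt {k : ℕ} (mu : Fin k → ℤ) (i : ℕ) (h : i < k) : kirExt k mu i = mu ⟨i, h⟩ := by
  simp [kirExt, h]

theorem kirBox_le {k : ℕ} {lam : ℕ → ℤ} {mu : Fin k → ℤ} (hm : mu ∈ kirBox k lam) (i : ℕ) (hi : i < k) :
    kirExt k mu i ≤ lam i ∧ kirNxt k lam i ≤ kirExt k mu i := by
  unfold kirBox at hm
  rw [Fintype.mem_piFinset] at hm
  have := hm ⟨i, hi⟩
  rw [Finset.mem_Icc] at this
  rw [kirExt_lt mu i hi]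
  exact ⟨this.2, this.1⟩

theorem kirBox_part {k : ℕ} {lam : ℕ → ℤ} (hl : IsPartitionSeq k lam) {mu : Fin k → ℤ}
    (hm : mu ∈ kirBox k lam) : IsPartitionSeq k (kirExt k mu) := by
  constructor
  · intro i hi
    have h1 := (kirBox_le hm i (by omega)).2
    have h2 := (kirBox_le hm (i+1) hi).1
    simp only [kirNxt, hi, if_true] at h1
    omega
  · intro i hi
    exact le_trans (kirNxt_nonneg hl i) (kirBox_le hm i hi).2

theorem kir_part_anti {k : ℕ} {lam : ℕ → ℤ} (hl : IsPartitionSeq k lam) (i j : ℕ) (hij : i ≤ j) (hj : j < k) :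
    lam j ≤ lam i := by
  induction j, hij using Nat.le_induction with
  | base => exact le_rfl
  | succ j h ih => exact le_trans (hl.1 j hj) (ih (by omega))

/-- restrict a tableau to the entries at most `n` -/
def kirRestrict {k : ℕ} {lam : ℕ → ℤ} {n : ℕ} (hl : IsPartitionSeq k lam) (T : SSYT k lam 1 (n+1))
    (mu : Fin k → ℤ) (hmu : kirShape T = mu) : SSYT k (kirExt k mu) 1 n where
  entry i j := if T.entry i j ≤ n then T.entry i j else 0
  zero_outside i j h := by
    split_ifs with h1
    · by_cases h2 : i < k ∧ (j : ℤ) < lam i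
      · exfalso
        apply h
        refine ⟨h2.1, ?_⟩
        rw [kirExt_lt mu i h2.1, ← hmu]
        exact (kirShape_iff T ⟨i, h2.1⟩ j h2.2).1 h1
      · exact T.zero_outside i j h2
    · rfl
  lower i j hi hj := by
    rw [kirExt_lt mu i hi, ← hmu] at hj
    have h1 := lt_of_lt_of_le hj (kirShape_le hl T ⟨i, hi⟩)
    rw [if_pos ((kirShape_iff T ⟨i, hi⟩ j h1).2 hj)]
    exact T.lower i j hi h1
  upper i j hi hj := by
    split_ifs with h
    · exact h
    · omega
  row_weak i j₁ j₂ hi h12 hj := by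
    rw [kirExt_lt mu i hi, ← hmu] at hj
    have h1 := lt_of_lt_of_le hj (kirShape_le hl T ⟨i, hi⟩)
    have h2 := (kirShape_iff T ⟨i, hi⟩ j₂ h1).2 hj
    have h3 := T.row_weak i j₁ j₂ hi h12 h1
    simp only at h2
    rw [if_pos h2, if_pos (le_trans h3 h2)]
    exact h3
  col_strict i₁ i₂ j h12 hi hj := by
    rw [kirExt_lt mu i₂ hi, ← hmu] at hj
    have h1 := lt_of_lt_of_le hj (kirShape_le hl T ⟨i₂, hi⟩)
    have h2 := (kirShape_iff T ⟨i₂, hi⟩ j h1).2 hj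
    have h3 := T.col_strict i₁ i₂ j h12 hi h1
    simp only at h2
    rw [if_pos h2, if_pos (le_trans h3.le h2)]
    exact h3

/-- fill the remaining cells with `n+1` -/
def kirExtend {k : ℕ} {lam : ℕ → ℤ} {n : ℕ} (hl : IsPartitionSeq k lam)
    (mu : Fin k → ℤ) (hm : mu ∈ kirBox k lam) (T : SSYT k (kirExt k mu) 1 n) : SSYT k lam 1 (n+1) where
  entry i j := if i < k ∧ (j : ℤ) < kirExt k mu i then T.entry i j else
    if i < k ∧ (j : ℤ) < lam i then n + 1 else 0
  zero_outside i j h := by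
    have h' : ¬ (i < k ∧ (j : ℤ) < kirExt k mu i) := by
      rintro ⟨h1, h2⟩
      exact h ⟨h1, lt_of_lt_of_le h2 (kirBox_le hm i h1).1⟩
    rw [if_neg h', if_neg h]
  lower i j hi hj := by
    split_ifs with h1
    · exact T.lower i j h1.1 h1.2
    · omega
    · rename_i h2; exact absurd (And.intro hi hj) h2
  upper i j hi hj := by
    split_ifs with h1
    · exact le_trans (T.upper i j h1.1 h1.2) (by omega)
    · omega
    · omega
  row_weak i j₁ j₂ hi h12 hj := by
    have hj1 : (j₁ : ℤ) < lam i := by omega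
    by_cases h2 : (j₂ : ℤ) < kirExt k mu i
    · have h1 : (j₁ : ℤ) < kirExt k mu i := by omega
      rw [if_pos ⟨hi, h1⟩, if_pos ⟨hi, h2⟩]
      exact T.row_weak i j₁ j₂ hi h12 h2
    · have h2' : ¬ (i < k ∧ (j₂ : ℤ) < kirExt k mu i) := fun h => h2 h.2
      rw [if_neg h2', if_pos (show i < k ∧ (j₂ : ℤ) < lam i from ⟨hi, hj⟩)]
      split_ifs with h1
      · exact le_trans (T.upper i j₁ h1.1 h1.2) (by omega)
      · exact le_rfl
      · omega
  col_strict i₁ i₂ j h12 hi hj := by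
    have hi1 : i₁ < k := by omega
    by_cases h2 : (j : ℤ) < kirExt k mu i₂
    · have h1 := lt_of_lt_of_le h2 (kir_part_anti (kirBox_part hl hm) i₁ i₂ h12.le hi)
      rw [if_pos ⟨hi1, h1⟩, if_pos ⟨hi, h2⟩]
      exact T.col_strict i₁ i₂ j h12 hi h2
    · have h1 : (j : ℤ) < kirExt k mu i₁ := by
        have h3 := (kirBox_le hm i₁ hi1).2
        have h4 := kir_part_anti hl (i₁+1) i₂ (by omega) hi
        have h5 : i₁ + 1 < k := by omega
        simp only [kirNxt, h5, if_true] at h3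
        omega
      rw [if_pos ⟨hi1, h1⟩, if_neg (fun h => h2 h.2), if_pos ⟨hi, hj⟩]
      have := T.upper i₁ j hi1 h1
      omega

theorem kirExtend_shape {k : ℕ} {lam : ℕ → ℤ} {n : ℕ} (hl : IsPartitionSeq k lam)
    (mu : Fin k → ℤ) (hm : mu ∈ kirBox k lam) (T : SSYT k (kirExt k mu) 1 n) :
    kirShape (kirExtend hl mu hm T) = mu := by
  funext i
  have hb := kirBox_le hm i i.2
  have hn := kirNxt_nonneg hl i
  have : (Finset.range (lam i).toNat).filter (fun j => (kirExtend hl mu hm T).entry i j ≤ n) =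
      Finset.range (kirExt k mu i).toNat := by
    ext j
    rw [Finset.mem_filter, Finset.mem_range, Finset.mem_range]
    change _ ∧ (if (i:ℕ) < k ∧ (j : ℤ) < kirExt k mu i then T.entry i j else
      if (i:ℕ) < k ∧ (j : ℤ) < lam i then n + 1 else 0) ≤ n ↔ _
    constructor
    · rintro ⟨h1, h2⟩
      by_contra h3
      rw [if_neg (by rintro ⟨_, h⟩; omega), if_pos ⟨i.2, by omega⟩] at h2
      omega
    · intro h
      have h1 : (j : ℤ) < kirExt k mu i := by omega
      rw [if_pos ⟨i.2, h1⟩]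
      exact ⟨by omega, T.upper i j i.2 h1⟩
  unfold kirShape
  rw [this, Finset.card_range]
  have h4 := kirExt_lt mu i i.2
  simp only [Fin.eta] at h4
  omega

theorem kirExtend_weight {k : ℕ} {lam : ℕ → ℤ} {n : ℕ} (hl : IsPartitionSeq k lam)
    (mu : Fin k → ℤ) (hm : mu ∈ kirBox k lam) (T : SSYT k (kirExt k mu) 1 n) :
    (kirExtend hl mu hm T).weight =
      (∏ i : Fin k, MvPolynomial.X (n+1) ^ (lam i - mu i).toNat) * T.weight := by
  unfold SSYT.weight
  have h0 : (∏ i : Fin k, MvPolynomial.X (n+1) ^ (lam i - mu i).toNat : MvPolynomial ℕ ℤ) =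
      ∏ i ∈ Finset.range k, MvPolynomial.X (n+1) ^ (lam i - kirExt k mu i).toNat := by
    rw [Finset.prod_range]
    apply Finset.prod_congr rfl
    intro i _
    rw [kirExt_lt mu i i.2]
  rw [h0, ← Finset.prod_mul_distrib]
  apply Finset.prod_congr rfl
  intro i hi
  rw [Finset.mem_range] at hi
  have hb := kirBox_le hm i hi
  have hn := kirNxt_nonneg hl i
  have hs : (lam i).toNat = (kirExt k mu i).toNat + (lam i - kirExt k mu i).toNat := by omega
  rw [hs, Finset.prod_range_add, mul_comm]
  congr 1
  · rw [← Finset.card_range (lam i - kirExt k mu i).toNat, ← Finset.prod_const, Finset.card_range]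
    apply Finset.prod_congr rfl
    intro j hj
    rw [Finset.mem_range] at hj
    simp only [kirExtend]
    rw [if_neg (by rintro ⟨_, h⟩; push_cast at h; omega), if_pos ⟨hi, by push_cast; omega⟩]
  · apply Finset.prod_congr rfl
    intro j hj
    rw [Finset.mem_range] at hj
    simp only [kirExtend]
    rw [if_pos ⟨hi, by omega⟩]

theorem kirRestrict_extend {k : ℕ} {lam : ℕ → ℤ} {n : ℕ} (hl : IsPartitionSeq k lam)
    (mu : Fin k → ℤ) (hm : mu ∈ kirBox k lam) (T : SSYT k (kirExt k mu) 1 n) :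
    kirRestrict hl (kirExtend hl mu hm T) mu (kirExtend_shape hl mu hm T) = T := by
  apply kir_ssyt_ext
  funext i j
  simp only [kirRestrict, kirExtend]
  by_cases h : i < k ∧ (j : ℤ) < kirExt k mu i
  · simp only [if_pos h]
    rw [if_pos (T.upper i j h.1 h.2)]
  · simp only [if_neg h]
    rw [T.zero_outside i j h]
    split_ifs <;> omega

theorem kirExtend_restrict {k : ℕ} {lam : ℕ → ℤ} {n : ℕ} (hl : IsPartitionSeq k lam)
    (T : SSYT k lam 1 (n+1)) (mu : Fin k → ℤ) (hm : mu ∈ kirBox k lam) (hmu : kirShape T = mu) :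
    kirExtend hl mu hm (kirRestrict hl T mu hmu) = T := by
  apply kir_ssyt_ext
  funext i j
  simp only [kirRestrict, kirExtend]
  by_cases h : i < k ∧ (j : ℤ) < lam i
  · have h1 := kirShape_iff T ⟨i, h.1⟩ j h.2
    rw [hmu, ← kirExt_lt mu i h.1] at h1
    simp only at h1
    have h3 := T.upper i j h.1 h.2
    by_cases h2 : (j : ℤ) < kirExt k mu i
    · rw [if_pos ⟨h.1, h2⟩, if_pos (h1.2 h2)]
    · rw [if_neg (fun h => h2 h.2), if_pos h]
      have := mt h1.1 h2
      omega
  · have h1 : ¬ (i < k ∧ (j : ℤ) < kirExt k mu i) := by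
      rintro ⟨a, b⟩
      exact h ⟨a, lt_of_lt_of_le b (kirBox_le hm i a).1⟩
    rw [if_neg h1, if_neg h, T.zero_outside i j h]

theorem kir_branch (k n : ℕ) (lam : ℕ → ℤ) (hl : IsPartitionSeq k lam) :
    ∑ᶠ T : SSYT k lam 1 (n+1), T.weight = ∑ mu ∈ kirBox k lam,
      (∏ i : Fin k, MvPolynomial.X (n+1) ^ (lam i - mu i).toNat) *
        ∑ᶠ T : SSYT k (kirExt k mu) 1 n, T.weight := by
  classical
  have : ∀ (l : ℕ → ℤ) (m : ℕ), Fintype (SSYT k l 1 m) := fun l m => Fintype.ofFinite _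
  simp only [finsum_eq_sum_of_fintype]
  rw [← Finset.sum_fiberwise_of_maps_to (s := Finset.univ) (t := kirBox k lam) (g := kirShape)
    (fun T _ => kirShape_mem hl T)]
  apply Finset.sum_congr rfl
  intro mu hm
  rw [Finset.mul_sum]
  refine Finset.sum_bij' (fun T hT => kirRestrict hl T mu (Finset.mem_filter.1 hT).2)
    (fun T _ => kirExtend hl mu hm T) ?_ ?_ ?_ ?_ ?_
  · intro T hT; exact Finset.mem_univ _
  · intro T hT; exact Finset.mem_filter.2 ⟨Finset.mem_univ _, kirExtend_shape hl mu hm T⟩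
  · intro T hT; exact kirExtend_restrict hl T mu hm _
  · intro T hT; exact kirRestrict_extend hl mu hm T
  · intro T hT
    rw [← kirExtend_weight hl mu hm, kirExtend_restrict]

theorem kir_base (k : ℕ) (lam : ℕ → ℤ) (hl : IsPartitionSeq k lam) :
    ∑ᶠ T : SSYT k lam 1 0, T.weight = (kirJT k lam 0).det := by
  by_cases h : ∀ i < k, lam i = 0
  · rw [kirJT_zero k lam h]
    let T0 : SSYT k lam 1 0 :=
      { entry := fun _ _ => 0
        zero_outside := fun _ _ _ => rfl
        lower := fun i j hi hj => by rw [h i hi] at hj; omega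
        upper := fun i j hi hj => le_rfl
        row_weak := fun _ _ _ _ _ _ => le_rfl
        col_strict := fun i₁ i₂ j _ hi hj => by rw [h i₂ hi] at hj; omega }
    rw [finsum_eq_single _ T0]
    · unfold SSYT.weight
      apply Finset.prod_eq_one
      intro i hi
      rw [h i (Finset.mem_range.1 hi)]
      simp
    · intro T hT
      exfalso
      apply hT
      apply kir_ssyt_ext
      funext i j
      apply T.zero_outside
      rintro ⟨a, b⟩
      rw [h i a] at b
      omega
  · push Not at h
    obtain ⟨i, hi, h⟩ := h
    have h1 := hl.2 i hi
    have h2 := kir_part_anti hl 0 i (by omega) hi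
    have h0 : 0 < lam 0 := by omega
    rw [kirJT_zero' k lam (by omega) h0]
    apply finsum_eq_zero_of_forall_eq_zero
    intro T
    exfalso
    have h3 := T.lower 0 0 (by omega) (by simpa using h0)
    have h4 := T.upper 0 0 (by omega) (by simpa using h0)
    omega

/-- Jacobi–Trudi -/
theorem kir_jacobi_trudi (k n : ℕ) : ∀ (lam : ℕ → ℤ), IsPartitionSeq k lam →
    ∑ᶠ T : SSYT k lam 1 n, T.weight = (kirJT k lam n).det := by
  induction n with
  | zero => exact fun lam hl => kir_base k lam hl
  | succ n ih =>
    intro lam hl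
    rw [kir_branch k n lam hl, kirJT_branch k n lam hl]
    apply Finset.sum_congr rfl
    intro mu hm
    rw [ih _ (kirBox_part hl hm)]

theorem kir_schur (k n : ℕ) (c : ℤ) (hc : 0 ≤ c) :
    schur k (fun _ => c) 1 n = (kirJT k (fun _ => c) n).det := by
  have hl : IsPartitionSeq k (fun _ => c) := ⟨fun _ _ => le_rfl, fun _ _ => hc⟩
  unfold schur
  rw [if_pos hl]
  exact kir_jacobi_trudi k n _ hl

/-- Kirillov's identity: for `c, r ≥ 1` and `n ≥ 1`:
`(s^{[n]}_{c^r})² = s^{[n]}_{c^{r-1}} · s^{[n]}_{c^{r+1}} + s^{[n]}_{(c-1)^r} · s^{[n]}_{(c+1)^r}`. -/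
theorem stmt_14 (c r n : ℕ) (hc : 1 ≤ c) (hr : 1 ≤ r) (hn : 1 ≤ n) :
    schur r (fun _ => (c : ℤ)) 1 n ^ 2 =
      schur (r - 1) (fun _ => (c : ℤ)) 1 n * schur (r + 1) (fun _ => (c : ℤ)) 1 n +
        schur r (fun _ => (c : ℤ) - 1) 1 n * schur r (fun _ => (c : ℤ) + 1) 1 n := by
  obtain ⟨k, rfl⟩ : ∃ k, r = k + 1 := ⟨r - 1, by omega⟩
  rw [kir_schur _ n c (by omega), kir_schur _ n c (by omega), kir_schur _ n c (by omega),
    kir_schur _ n ((c:ℤ) - 1) (by omega), kir_schur _ n ((c:ℤ) + 1) (by omega)]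
  have h := kir_dodgson (kirJT (k+1+1) (fun _ => (c:ℤ)) n)
  have e1 : (kirJT (k+1+1) (fun _ => (c:ℤ)) n).submatrix (fun i : Fin k => i.castSucc.succ)
      (fun i : Fin k => i.castSucc.succ) = kirJT (k+1-1) (fun _ => (c:ℤ)) n := by
    refine Matrix.ext fun i j => ?_
    simp only [kirJT, Matrix.submatrix_apply, Fin.val_succ, Fin.val_castSucc]
    congr 1; push_cast; ring
  have e2 : (kirJT (k+1+1) (fun _ => (c:ℤ)) n).submatrix Fin.succ Fin.succ =
      kirJT (k+1) (fun _ => (c:ℤ)) n := by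
    refine Matrix.ext fun i j => ?_
    simp only [kirJT, Matrix.submatrix_apply, Fin.val_succ]
    congr 1; push_cast; ring
  have e3 : (kirJT (k+1+1) (fun _ => (c:ℤ)) n).submatrix Fin.castSucc Fin.castSucc =
      kirJT (k+1) (fun _ => (c:ℤ)) n := by
    refine Matrix.ext fun i j => ?_
    simp only [kirJT, Matrix.submatrix_apply, Fin.val_castSucc]
  have e4 : (kirJT (k+1+1) (fun _ => (c:ℤ)) n).submatrix Fin.succ Fin.castSucc =
      kirJT (k+1) (fun _ => (c:ℤ) - 1) n := by
    refine Matrix.ext fun i j => ?_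
    simp only [kirJT, Matrix.submatrix_apply, Fin.val_succ, Fin.val_castSucc]
    congr 1; push_cast; ring
  have e5 : (kirJT (k+1+1) (fun _ => (c:ℤ)) n).submatrix Fin.castSucc Fin.succ =
      kirJT (k+1) (fun _ => (c:ℤ) + 1) n := by
    refine Matrix.ext fun i j => ?_
    simp only [kirJT, Matrix.submatrix_apply, Fin.val_succ, Fin.val_castSucc]
    congr 1; push_cast; ring
  rw [e1, e2, e3, e4, e5] at h
  linear_combination -h
end
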